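/- arXiv:2409.12806 — 3 statements merged into one kernel-verified Lean document; each statement's English description precedes it below -/
import Mathlib

section
/- Let Lambda be a lattice in C and let lambda be a non-zero rational number. Then the meromorphic function omega -> wp_Lambda(lambda omega) is algebraic over the field C(wp_Lambda): there exist an integer m >= 1 and rational functions c_0, ..., c_{m-1} in C(U) such that wp_Lambda(lambda omega)^m + sum_{i<m} c_i(wp_Lambda(omega)) wp_Lambda(lambda omega)^i = 0 for all omega in C such that omega and lambda omega are not in Lambda and all terms are defined. -/
open scoped BigOperators

namespace WeierstrassElliptic

/-- The lattice `ℤω₁ + ℤω₂ ⊆ ℂ`. -/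
def latticeSet (ω₁ ω₂ : ℂ) : Set ℂ :=
  {z | ∃ m n : ℤ, z = (m : ℂ) * ω₁ + (n : ℂ) * ω₂}

/-- The point of the lattice indexed by `p ∈ ℤ × ℤ`. -/
def latPt (ω₁ ω₂ : ℂ) (p : ℤ × ℤ) : ℂ := (p.1 : ℂ) * ω₁ + (p.2 : ℂ) * ω₂

/-- The Weierstrass `℘`-function of the lattice `ℤω₁ + ℤω₂`:
`℘(z) = z⁻² + ∑_{λ ∈ Λ, λ ≠ 0} ((z+λ)⁻² - λ⁻²)`. -/
noncomputable def wp (ω₁ ω₂ : ℂ) (z : ℂ) : ℂ :=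
  (z ^ 2)⁻¹ + ∑' p : ℤ × ℤ,
    if p = 0 then 0
    else ((z + latPt ω₁ ω₂ p) ^ 2)⁻¹ - ((latPt ω₁ ω₂ p) ^ 2)⁻¹

/-- The invariant `g₂ = 60 ∑_{λ ∈ Λ, λ ≠ 0} λ⁻⁴`. -/
noncomputable def g2 (ω₁ ω₂ : ℂ) : ℂ :=
  60 * ∑' p : ℤ × ℤ, if p = 0 then 0 else ((latPt ω₁ ω₂ p) ^ 4)⁻¹

/-- The invariant `g₃ = 140 ∑_{λ ∈ Λ, λ ≠ 0} λ⁻⁶`. -/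
noncomputable def g3 (ω₁ ω₂ : ℂ) : ℂ :=
  140 * ∑' p : ℤ × ℤ, if p = 0 then 0 else ((latPt ω₁ ω₂ p) ^ 6)⁻¹

/-- The Weierstrass `ζ`-function:
`ζ(z) = z⁻¹ + ∑_{λ ∈ Λ, λ ≠ 0} ((z-λ)⁻¹ + λ⁻¹ + z λ⁻²)`. -/
noncomputable def wzeta (ω₁ ω₂ : ℂ) (z : ℂ) : ℂ :=
  z⁻¹ + ∑' p : ℤ × ℤ,
    if p = 0 then 0
    else (z - latPt ω₁ ω₂ p)⁻¹ + (latPt ω₁ ω₂ p)⁻¹ + z * ((latPt ω₁ ω₂ p) ^ 2)⁻¹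

/-- A function `c : (0,1) → ℂ` (defined on all of `ℝ`, but only its restriction to `(0,1)`
matters) is algebraic over `ℂ(t)` if there is a nonzero polynomial `P ∈ ℂ[T,Z]` with
`P(t, c(t)) = 0` for all `t ∈ (0,1)`.  Here `T = X 0` and `Z = X 1`. -/
def AlgebraicOverCt (c : ℝ → ℂ) : Prop :=
  ∃ P : MvPolynomial (Fin 2) ℂ, P ≠ 0 ∧
    ∀ t ∈ Set.Ioo (0 : ℝ) 1, MvPolynomial.eval ![(t : ℂ), c t] P = 0

/-- Membership in the set `X`: `b : (0,1) → ℂ` is such that for every `t`, either `b(t)`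
lies in the lattice `Λ(t)` (a pole of `℘`), or `t ↦ ℘(b(t),t)` is algebraic over `ℂ(t)`. -/
def MemX (ω₁ ω₂ b : ℝ → ℂ) : Prop :=
  ∀ t ∈ Set.Ioo (0 : ℝ) 1,
    b t ∈ latticeSet (ω₁ t) (ω₂ t) ∨
      AlgebraicOverCt (fun s => wp (ω₁ s) (ω₂ s) (b s))

end WeierstrassElliptic

namespace WeierstrassElliptic

open Filter Topology Polynomial

lemma aux_removable (L : PeriodPair) (F : ℂ → ℂ)
    (hp : ∀ z, ∀ l ∈ L.lattice, F (z + l) = F z)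
    (hl : ∀ z, ∃ K : ℂ → ℂ, AnalyticAt ℂ K z ∧ ∀ᶠ w in 𝓝[≠] z, F w = K w) :
    ∃ c, ∀ z, ContinuousAt F z → F z = c := by
  let E : ℂ → ℂ := fun z => limUnder (𝓝[≠] z) F
  have hE : ∀ z K, ContinuousAt K z → (∀ᶠ w in 𝓝[≠] z, F w = K w) → E z = K z := by
    intro z K hK h
    apply Tendsto.limUnder_eq
    exact (hK.tendsto.mono_left nhdsWithin_le_nhds).congr' (h.mono fun w hw => hw.symm)
  have hA : ∀ z, AnalyticAt ℂ E z := by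
    intro z
    obtain ⟨K, hK, h⟩ := hl z
    apply hK.congr
    have h1 : ∀ᶠ w in 𝓝[≠] z, E w = K w := by
      have h2 : ∀ᶠ w in 𝓝[≠] z, ∀ᶠ v in 𝓝[≠] w, F v = K v := by
        have := eventually_eventually_nhdsWithin.2 h
        filter_upwards [this, self_mem_nhdsWithin] with w hw hne
        have h3 : 𝓝[≠] z ≤ 𝓝[≠] z := le_rfl
        have : 𝓝[{z}ᶜ] w = 𝓝 w := isOpen_compl_singleton.nhdsWithin_eq hne
        rw [this] at hw
        exact hw.filter_mono nhdsWithin_le_nhds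
      have h3 : ∀ᶠ w in 𝓝[≠] z, ContinuousAt K w :=
        (hK.eventually_analyticAt.mono fun w hw => hw.continuousAt).filter_mono nhdsWithin_le_nhds
      filter_upwards [h2, h3] with w hw hc
      exact hE w K hc hw
    have h0 : E z = K z := hE z K hK.continuousAt h
    have : ∀ᶠ w in 𝓝 z, w ≠ z → E w = K w := by
      simpa [eventually_nhdsWithin_iff] using h1
    filter_upwards [this] with w hw
    by_cases hwz : w = z
    · rw [hwz, h0]
    · exact (hw hwz).symm
  have hd : Differentiable ℂ E := fun z => (hA z).differentiableAt
  have hper : ∀ z, ∀ l ∈ L.lattice, E (z + l) = E z := by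
    intro z l hlm
    obtain ⟨K, hK, h⟩ := hl (z + l)
    have h1 := hE _ K hK.continuousAt h
    rw [h1]
    symm
    have ht : Tendsto (fun w => w + l) (𝓝[≠] z) (𝓝[≠] (z + l)) := by
      apply tendsto_nhdsWithin_of_tendsto_nhds_of_eventually_within
      · exact (continuous_add_const l).continuousAt.tendsto.mono_left nhdsWithin_le_nhds
      · filter_upwards [self_mem_nhdsWithin] with w hw
        simpa using hw
    have h2 := hE z (fun w => K (w + l)) ?_ ?_
    · exact h2
    · exact ContinuousAt.comp' (f := fun w => w + l) hK.continuousAt (by fun_prop)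
    · filter_upwards [ht.eventually h] with w hw
      rw [← hw, hp w l hlm]
  refine ⟨E 0, fun z hz => ?_⟩
  rw [← hE z F hz (by simp)]
  exact hd.apply_eq_apply_of_bounded (IsZLattice.isCompact_range_of_periodic L.lattice _
    hd.continuous fun z w hw => hper z w hw).isBounded z 0

lemma aux_local (s : ℂ) (f g F G : ℂ → ℂ) (N : ℕ) (c : Fin N × Fin N → ℂ)
    (hF : AnalyticAt ℂ F s) (hG : AnalyticAt ℂ G s)
    (hf : ∀ᶠ w in 𝓝[≠] s, f w * (w - s) ^ 2 = F w)
    (hg : ∀ᶠ w in 𝓝[≠] s, g w * (w - s) ^ 2 = G w)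
    (hc : ∀ k < 4 * N, ∑ p : Fin N × Fin N, iteratedDeriv k (fun w => F w ^ (p.1 + 1 : ℕ) *
      G w ^ (p.2 : ℕ) * (w - s) ^ (4 * N - 2 * (p.1 + 1) - 2 * p.2 : ℕ)) s * c p = 0) :
    ∃ K : ℂ → ℂ, AnalyticAt ℂ K s ∧ ∀ᶠ w in 𝓝[≠] s,
      ∑ p : Fin N × Fin N, c p * (f w ^ (p.1 + 1 : ℕ) * g w ^ (p.2 : ℕ)) = K w := by
  set H : ℂ → ℂ := fun w => ∑ p : Fin N × Fin N, c p * (F w ^ (p.1 + 1 : ℕ) *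
      G w ^ (p.2 : ℕ) * (w - s) ^ (4 * N - 2 * (p.1 + 1) - 2 * p.2 : ℕ)) with hH
  have hm : ∀ p : Fin N × Fin N, AnalyticAt ℂ (fun w => (F w ^ (p.1 + 1 : ℕ) *
      G w ^ (p.2 : ℕ) * (w - s) ^ (4 * N - 2 * (p.1 + 1) - 2 * p.2 : ℕ))) s := by
    intro p; fun_prop
  have hHa : AnalyticAt ℂ H s := by
    apply Finset.analyticAt_fun_sum
    intro p _
    exact analyticAt_const.mul (hm p)
  have ho : ((4 * N : ℕ) : ℕ∞) ≤ analyticOrderAt H s := by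
    rw [natCast_le_analyticOrderAt_iff_iteratedDeriv_eq_zero hHa]
    intro k hk
    rw [hH, iteratedDeriv_fun_sum]
    · rw [← hc k hk]
      refine Finset.sum_congr rfl fun p _ => ?_
      rw [iteratedDeriv_const_mul_field, mul_comm]
    · intro p _
      exact (analyticAt_const.mul (hm p)).contDiffAt
  obtain ⟨K, hK, hKe⟩ := (natCast_le_analyticOrderAt hHa).1 ho
  refine ⟨K, hK, ?_⟩
  filter_upwards [hf, hg, hKe.filter_mono nhdsWithin_le_nhds, self_mem_nhdsWithin]
    with w h1 h2 h3 h4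
  have h5 : (w - s) ^ (4 * N) ≠ 0 := pow_ne_zero _ (sub_ne_zero.2 h4)
  apply mul_left_cancel₀ h5
  rw [smul_eq_mul] at h3
  rw [← h3, hH, Finset.mul_sum]
  refine Finset.sum_congr rfl fun p _ => ?_
  have h6 : (w - s) ^ (4 * N) = (w - s) ^ (4 * N - 2 * (p.1 + 1) - 2 * p.2 : ℕ) *
      ((w - s) ^ 2) ^ (p.1 + 1 : ℕ) * ((w - s) ^ 2) ^ (p.2 : ℕ) := by
    rw [← pow_mul, ← pow_mul, ← pow_add, ← pow_add]
    congr 1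
    have := p.1.2
    have := p.2.2
    omega
  rw [← h1, ← h2, h6, mul_pow, mul_pow]
  ring

lemma aux_main (L : PeriodPair) (f g : ℂ → ℂ)
    (hpf : ∀ z, ∀ l ∈ L.lattice, f (z + l) = f z)
    (hpg : ∀ z, ∀ l ∈ L.lattice, g (z + l) = g z)
    (S : Finset ℂ)
    (hS : ∀ z, (∃ s ∈ S, z - s ∈ L.lattice) ∨ (AnalyticAt ℂ f z ∧ AnalyticAt ℂ g z))
    (hf : ∀ s, ∃ F, AnalyticAt ℂ F s ∧ ∀ᶠ w in 𝓝[≠] s, f w * (w - s) ^ 2 = F w)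
    (hg : ∀ s, ∃ F, AnalyticAt ℂ F s ∧ ∀ᶠ w in 𝓝[≠] s, g w * (w - s) ^ 2 = F w) :
    ∃ P : ℂ[X][X], P ≠ 0 ∧ ∀ z, ContinuousAt f z → ContinuousAt g z →
      P.evalEval (f z) (g z) = 0 := by
  choose F hFa hF using hf
  choose G hGa hG using hg
  set N := 4 * S.card + 1 with hN
  let A : Matrix (S × Fin (4 * N)) (Fin N × Fin N) ℂ := fun sk p =>
    iteratedDeriv sk.2 (fun w => F sk.1 w ^ (p.1 + 1 : ℕ) *
      G sk.1 w ^ (p.2 : ℕ) * (w - sk.1) ^ (4 * N - 2 * (p.1 + 1) - 2 * p.2 : ℕ)) sk.1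
  have hker : LinearMap.ker A.mulVecLin ≠ ⊥ := by
    apply LinearMap.ker_ne_bot_of_finrank_lt
    simp only [Module.finrank_fintype_fun_eq_card, Fintype.card_prod, Fintype.card_coe,
      Fintype.card_fin]
    rw [hN]; nlinarith
  obtain ⟨c, hc, hc0⟩ := (Submodule.ne_bot_iff _).1 hker
  rw [LinearMap.mem_ker] at hc
  let Φ : ℂ → ℂ := fun w => ∑ p : Fin N × Fin N, c p * (f w ^ (p.1 + 1 : ℕ) * g w ^ (p.2 : ℕ))
  have hpΦ : ∀ z, ∀ l ∈ L.lattice, Φ (z + l) = Φ z := by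
    intro z l hl
    simp only [Φ, hpf z l hl, hpg z l hl]
  obtain ⟨C0, hC0⟩ := aux_removable L Φ hpΦ (by
    intro z
    rcases hS z with ⟨s, hs, hzs⟩ | ⟨h1, h2⟩
    · obtain ⟨K, hK, hKe⟩ := aux_local s f g (F s) (G s) N c (hFa s) (hGa s) (hF s) (hG s) (by
        intro k hk
        have := congrFun hc (⟨s, hs⟩, ⟨k, hk⟩)
        rw [Matrix.mulVecLin_apply] at this
        exact this)
      have ht : Tendsto (fun w => w - (z - s)) (𝓝[≠] z) (𝓝[≠] s) := by
        apply tendsto_nhdsWithin_of_tendsto_nhds_of_eventually_within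
        · have : ContinuousAt (fun w => w - (z - s)) z := by fun_prop
          have h2 := this.tendsto
          rw [sub_sub_cancel] at h2
          exact h2.mono_left nhdsWithin_le_nhds
        · filter_upwards [self_mem_nhdsWithin] with w hw
          intro h
          apply hw
          simp only [Set.mem_singleton_iff] at h ⊢
          linear_combination h
      refine ⟨fun w => K (w - (z - s)), ?_, ?_⟩
      · apply AnalyticAt.fun_comp (g := K) (f := fun w => w - (z - s))
        · rw [sub_sub_cancel]; exact hK
        · fun_prop
      · filter_upwards [ht.eventually hKe] with w hw
        rw [← hw]
        have := hpΦ (w - (z - s)) _ hzs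
        rw [sub_add_cancel] at this
        exact this
    · refine ⟨Φ, ?_, by simp⟩
      apply Finset.analyticAt_fun_sum
      intro p _
      fun_prop)
  refine ⟨∑ p : Fin N × Fin N, C (C (c p) * X ^ (p.1 + 1 : ℕ)) * X ^ (p.2 : ℕ) - C (C C0), ?_, ?_⟩
  · intro h0
    apply hc0
    ext p
    have h1 := congrArg (fun Q : ℂ[X][X] => (Q.coeff (p.2 : ℕ)).coeff (p.1 + 1 : ℕ)) h0
    simp only [coeff_sub, finsetSum_coeff, coeff_C_mul, coeff_X_pow, coeff_zero] at h1
    have h2 : ((C (C C0) : ℂ[X][X]).coeff (p.2 : ℕ)).coeff (p.1 + 1 : ℕ) = 0 := by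
      rw [coeff_C]
      split_ifs <;> simp
    rw [h2, sub_zero, Finset.sum_eq_single p] at h1
    · simpa using h1
    · intro q _ hq
      by_cases h3 : (p.2 : ℕ) = q.2
      · by_cases h4 : (p.1 : ℕ) = q.1
        · exact absurd (Prod.ext (Fin.ext h4.symm) (Fin.ext h3.symm)) hq
        · simp [h3, coeff_X_pow, h4]
      · simp [h3]
    · simp
  · intro z h1 h2
    have h3 : ContinuousAt Φ z := by
      simp only [Φ]
      fun_prop
    have h4 := hC0 z h3
    simp only [Φ] at h4
    simp [evalEval, eval_finsetSum, ← h4, mul_assoc]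

lemma wp_eq (L : PeriodPair) (z : ℂ) : wp L.ω₁ L.ω₂ z = L.weierstrassP z := by
  rw [← L.weierstrassPExcept_add 0 z, wp, PeriodPair.weierstrassPExcept]
  rw [← (L.latticeEquivProd.symm.toEquiv.trans (Equiv.neg _)).tsum_eq]
  rw [add_comm]
  congr 1
  · apply tsum_congr
    intro p
    have h1 := L.latticeEquiv_symm_apply p
    by_cases hp : p = 0
    · simp [hp]
    · have : L.latticeEquivProd.symm p ≠ 0 := by simpa using hp
      have h2 : (L.latticeEquivProd.symm p : ℂ) ≠ 0 := by simpa using hp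
      have h3 : ((-(L.latticeEquivProd.symm p) : L.lattice) : ℂ) ≠ ((0 : L.lattice) : ℂ) := by
        simpa using hp
      change _ = if ((-(L.latticeEquivProd.symm p) : L.lattice) : ℂ) = ((0 : L.lattice) : ℂ) then
        (0 : ℂ) else 1 / (z - ((-(L.latticeEquivProd.symm p) : L.lattice) : ℂ)) ^ 2 -
          1 / ((-(L.latticeEquivProd.symm p) : L.lattice) : ℂ) ^ 2
      rw [if_neg hp, if_neg h3, NegMemClass.coe_neg, h1, latPt, sub_neg_eq_add, neg_sq,
        one_div, one_div]
  · simp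

lemma wp_pole (L : PeriodPair) (x : ℂ) : ∃ F, AnalyticAt ℂ F x ∧
    ∀ᶠ w in 𝓝[≠] x, L.weierstrassP w * (w - x) ^ 2 = F w := by
  by_cases hx : x ∈ L.lattice
  · refine ⟨fun z => (z - x) ^ 2 * L.weierstrassPExcept x z + 1 - (z - x) ^ 2 * (x ^ 2)⁻¹, ?_, ?_⟩
    · fun_prop
    · filter_upwards [self_mem_nhdsWithin] with w hw
      have := L.ite_eq_one_sub_sq_mul_weierstrassP x hx w
      rw [if_neg (by simpa using hw)] at this
      rw [mul_comm, this, div_eq_mul_inv]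
  · have := L.analyticOnNhd_weierstrassP x hx
    exact ⟨fun w => L.weierstrassP w * (w - x) ^ 2, by fun_prop, by simp⟩

lemma wp_pole_mul (L : PeriodPair) (n : ℤ) (hn : n ≠ 0) (x : ℂ) : ∃ F, AnalyticAt ℂ F x ∧
    ∀ᶠ w in 𝓝[≠] x, L.weierstrassP (n * w) * (w - x) ^ 2 = F w := by
  have hn' : (n : ℂ) ≠ 0 := by exact_mod_cast hn
  obtain ⟨F, hF, h⟩ := wp_pole L (n * x)
  refine ⟨fun w => ((n : ℂ) ^ 2)⁻¹ * F (n * w), ?_, ?_⟩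
  · apply analyticAt_const.mul
    exact AnalyticAt.fun_comp (g := F) (f := fun w => (n : ℂ) * w) hF (by fun_prop)
  · have ht : Tendsto (fun w => (n : ℂ) * w) (𝓝[≠] x) (𝓝[≠] (n * x)) := by
      apply tendsto_nhdsWithin_of_tendsto_nhds_of_eventually_within
      · exact (continuous_const_mul (n : ℂ)).continuousAt.tendsto.mono_left nhdsWithin_le_nhds
      · filter_upwards [self_mem_nhdsWithin] with w hw
        simpa [hn'] using hw
    filter_upwards [ht.eventually h] with w hw
    rw [← hw]
    field_simp

lemma int_mul_mem (L : PeriodPair) (n : ℤ) {l : ℂ} (hl : l ∈ L.lattice) :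
    (n : ℂ) * l ∈ L.lattice := by
  have := L.lattice.smul_mem n hl
  rwa [zsmul_eq_mul] at this

lemma wp_per (L : PeriodPair) (n : ℤ) (z : ℂ) (l : ℂ) (hl : l ∈ L.lattice) :
    L.weierstrassP (n * (z + l)) = L.weierstrassP (n * z) := by
  rw [mul_add]
  exact L.weierstrassP_add_coe _ ⟨_, int_mul_mem L n hl⟩

lemma wp_an (L : PeriodPair) (n : ℤ) (z : ℂ) (h : (n : ℂ) * z ∉ L.lattice) :
    AnalyticAt ℂ (fun w => L.weierstrassP (n * w)) z :=
  AnalyticAt.fun_comp (g := L.weierstrassP) (f := fun w => (n : ℂ) * w)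
    (L.analyticOnNhd_weierstrassP _ h) (by fun_prop)

lemma exists_S (L : PeriodPair) (d : ℤ) (hd : d ≠ 0) :
    ∃ S : Finset ℂ, ∀ z, (d : ℂ) * z ∈ L.lattice → ∃ s ∈ S, z - s ∈ L.lattice := by
  have hd' : (d : ℂ) ≠ 0 := by exact_mod_cast hd
  refine ⟨(Finset.Ico 0 |d| ×ˢ Finset.Ico 0 |d|).image
    (fun p : ℤ × ℤ => ((p.1 : ℂ) * L.ω₁ + p.2 * L.ω₂) / d), fun z hz => ?_⟩
  obtain ⟨m, n, e⟩ := PeriodPair.mem_lattice.1 hz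
  refine ⟨(((m % d : ℤ) : ℂ) * L.ω₁ + ((n % d : ℤ) : ℂ) * L.ω₂) / d, ?_, ?_⟩
  · rw [Finset.mem_image]
    refine ⟨(m % d, n % d), ?_, rfl⟩
    simp [Int.emod_nonneg _ hd, Int.emod_lt_abs _ hd]
  · rw [PeriodPair.mem_lattice]
    refine ⟨m / d, n / d, ?_⟩
    have hm : ((m % d : ℤ) : ℂ) + d * ((m / d : ℤ) : ℂ) = m := by
      exact_mod_cast Int.emod_add_mul_ediv m d
    have hn : ((n % d : ℤ) : ℂ) + d * ((n / d : ℤ) : ℂ) = n := by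
      exact_mod_cast Int.emod_add_mul_ediv n d
    field_simp
    linear_combination e + hm * L.ω₁ + hn * L.ω₂

lemma exists_poly (L : PeriodPair) (a b : ℤ) (ha : a ≠ 0) (hb : b ≠ 0) :
    ∃ P : ℂ[X][X], P ≠ 0 ∧ ∀ z : ℂ, (b : ℂ) * z ∉ L.lattice → (a : ℂ) * z ∉ L.lattice →
      P.evalEval (L.weierstrassP (b * z)) (L.weierstrassP (a * z)) = 0 := by
  obtain ⟨S, hS⟩ := exists_S L (a * b) (mul_ne_zero ha hb)
  obtain ⟨P, hP, h⟩ := aux_main L (fun z => L.weierstrassP (b * z))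
    (fun z => L.weierstrassP (a * z)) (wp_per L b) (wp_per L a) S (by
      intro z
      by_cases h : ((a * b : ℤ) : ℂ) * z ∈ L.lattice
      · exact Or.inl (hS z h)
      · refine Or.inr ⟨wp_an L b z fun h1 => h ?_, wp_an L a z fun h1 => h ?_⟩
        · have := int_mul_mem L a h1
          push_cast
          rwa [mul_assoc]
        · have := int_mul_mem L b h1
          push_cast
          rwa [mul_comm (a : ℂ), mul_assoc]) (wp_pole_mul L b hb) (wp_pole_mul L a ha)
  exact ⟨P, hP, fun z h1 h2 => h z (wp_an L b z h1).continuousAt (wp_an L a z h2).continuousAt⟩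

/-- For a lattice `Λ` and a nonzero rational `λ`, the function
`ω ↦ ℘(λω)` is algebraic over `ℂ(℘)`: there are `m ≥ 1` and rational functions
`cᵢ = pᵢ/qᵢ ∈ ℂ(U)` with `℘(λω)^m + ∑_{i<m} cᵢ(℘(ω)) ℘(λω)^i = 0` whenever `ω, λω ∉ Λ`
and all denominators are nonzero. -/
theorem statement9 (ω₁ ω₂ : ℂ) (h : LinearIndependent ℝ ![ω₁, ω₂]) (lam : ℚ)
    (hlam : lam ≠ 0) :
    ∃ m : ℕ, 1 ≤ m ∧ ∃ p q : Fin m → Polynomial ℂ, (∀ i, q i ≠ 0) ∧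
      ∀ ω : ℂ, ω ∉ latticeSet ω₁ ω₂ → (lam : ℂ) * ω ∉ latticeSet ω₁ ω₂ →
        (∀ i, (q i).eval (wp ω₁ ω₂ ω) ≠ 0) →
        wp ω₁ ω₂ ((lam : ℂ) * ω) ^ m +
          ∑ i : Fin m,
            ((p i).eval (wp ω₁ ω₂ ω) / (q i).eval (wp ω₁ ω₂ ω)) *
              wp ω₁ ω₂ ((lam : ℂ) * ω) ^ (i : ℕ) = 0 := by
  obtain ⟨L, rfl, rfl⟩ : ∃ L : PeriodPair, L.ω₁ = ω₁ ∧ L.ω₂ = ω₂ := ⟨⟨ω₁, ω₂, h⟩, rfl, rfl⟩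
  have hlat : ∀ z, z ∈ latticeSet L.ω₁ L.ω₂ ↔ z ∈ L.lattice := by
    intro z
    rw [PeriodPair.mem_lattice]
    simp only [latticeSet, Set.mem_ofPred_eq, eq_comm]
  have hb : (lam.den : ℤ) ≠ 0 := by exact_mod_cast lam.den_nz
  have hb' : (lam.den : ℂ) ≠ 0 := by exact_mod_cast lam.den_nz
  obtain ⟨P, hP, hz⟩ := exists_poly L lam.num lam.den (Rat.num_ne_zero.2 hlam) hb
  have hd : (X * P : ℂ[X][X]).natDegree = P.natDegree + 1 := natDegree_X_mul hP
  have hlc : (X * P : ℂ[X][X]).leadingCoeff ≠ 0 :=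
    leadingCoeff_ne_zero.2 (mul_ne_zero X_ne_zero hP)
  refine ⟨P.natDegree + 1, by omega, fun i => (X * P : ℂ[X][X]).coeff i,
    fun _ => (X * P : ℂ[X][X]).leadingCoeff, fun _ => hlc, ?_⟩
  intro ω h1 h2 h3
  rw [hlat] at h1 h2
  simp only [wp_eq] at h3 ⊢
  have h4 := h3 0
  have e1 : ((lam.den : ℤ) : ℂ) * (ω / lam.den) = ω := by
    push_cast; field_simp
  have e2 : (lam.num : ℂ) * (ω / lam.den) = lam * ω := by
    rw [Rat.cast_def lam]; field_simp
  have h5 := hz (ω / lam.den) (by rwa [e1]) (by rwa [e2])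
  rw [e1, e2] at h5
  set x := L.weierstrassP ω
  set y := L.weierstrassP (lam * ω)
  have h6 : (X * P : ℂ[X][X]).evalEval x y = 0 := by
    simp [evalEval_mul, h5]
  rw [evalEval, eval_eq_sum_range (p := (X * P : ℂ[X][X])), hd, Finset.sum_range_succ, eval_add, eval_finsetSum,
    Finset.sum_range] at h6
  simp only [eval_mul, eval_pow, eval_C] at h6
  rw [leadingCoeff, hd] at h4 ⊢
  simp only [div_mul_eq_mul_div]
  rw [← Finset.sum_div]
  field_simp
  linear_combination h6

end WeierstrassElliptic
end

section
/- Let omega_1, omega_2 be R-linearly independent complex numbers and k a positive integer. Set Lambda' = Z(k omega_1) + Z(k omega_2) and Lambda = Z omega_1 + Z(k omega_2). Then for every omega in C not in Lambda, sum_{l=0}^{k-1} wp_{Lambda'}(omega + l omega_1) = wp_{Lambda}(omega) + sum_{l=1}^{k-1} wp_{Lambda'}(l omega_1). -/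
open scoped BigOperators

namespace WeierstrassElliptic

lemma wp_hasSum (ω₁ ω₂ : ℂ) (h : LinearIndependent ℝ ![ω₁, ω₂]) (z : ℂ) :
    HasSum (fun p : ℤ × ℤ => ((z + latPt ω₁ ω₂ p) ^ 2)⁻¹ - ((latPt ω₁ ω₂ p) ^ 2)⁻¹)
      (wp ω₁ ω₂ z) := by
  let L : PeriodPair := ⟨ω₁, ω₂, h⟩
  have h1 := (L.hasSum_weierstrassP z).summable
  have h2 := ((Equiv.neg (ℤ × ℤ)).trans L.latticeEquivProd.symm.toEquiv).summable_iff.mpr h1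
  have h3 : Summable (fun p : ℤ × ℤ =>
      ((z + latPt ω₁ ω₂ p) ^ 2)⁻¹ - ((latPt ω₁ ω₂ p) ^ 2)⁻¹) := by
    refine h2.congr fun p => ?_
    have e : ((L.latticeEquivProd.symm (-p) : L.lattice) : ℂ) = - latPt ω₁ ω₂ p := by
      rw [PeriodPair.latticeEquiv_symm_apply]
      simp [latPt, L]
      ring
    simp [e, -map_neg]
  have h4 : wp ω₁ ω₂ z = ∑' p : ℤ × ℤ,
      (((z + latPt ω₁ ω₂ p) ^ 2)⁻¹ - ((latPt ω₁ ω₂ p) ^ 2)⁻¹) := by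
    rw [h3.tsum_eq_add_tsum_ite 0, wp]
    simp [latPt]
  rw [h4]
  exact h3.hasSum

lemma wp_zero (ω₁ ω₂ : ℂ) : wp ω₁ ω₂ 0 = 0 := by
  simp [wp]

/-- Let `ω₁, ω₂` be `ℝ`-linearly independent and `k ≥ 1`.  With
`Λ' = ℤ(kω₁) + ℤ(kω₂)` and `Λ = ℤω₁ + ℤ(kω₂)`, for every `ω ∉ Λ`:
`∑_{l=0}^{k-1} ℘_{Λ'}(ω + lω₁) = ℘_Λ(ω) + ∑_{l=1}^{k-1} ℘_{Λ'}(lω₁)`. -/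
theorem statement10 (ω₁ ω₂ : ℂ) (h : LinearIndependent ℝ ![ω₁, ω₂]) (k : ℕ)
    (hk : 1 ≤ k) :
    ∀ ω : ℂ, ω ∉ latticeSet ω₁ ((k : ℂ) * ω₂) →
      ∑ l ∈ Finset.range k, wp ((k : ℂ) * ω₁) ((k : ℂ) * ω₂) (ω + (l : ℂ) * ω₁) =
        wp ω₁ ((k : ℂ) * ω₂) ω +
          ∑ l ∈ Finset.Ico 1 k, wp ((k : ℂ) * ω₁) ((k : ℂ) * ω₂) ((l : ℂ) * ω₁) := by
  intro ω _
  have hk0 : (k : ℝ) ≠ 0 := by positivity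
  have : NeZero k := ⟨by omega⟩
  rw [LinearIndependent.pair_iff] at h
  have hA : LinearIndependent ℝ ![(k : ℂ) * ω₁, (k : ℂ) * ω₂] := by
    rw [LinearIndependent.pair_iff]
    intro s t hst
    have := h (s * k) (t * k) (by rw [← hst]; simp; ring)
    simpa [hk0] using this
  have hB : LinearIndependent ℝ ![ω₁, (k : ℂ) * ω₂] := by
    rw [LinearIndependent.pair_iff]
    intro s t hst
    have := h s (t * k) (by rw [← hst]; simp; ring)
    simpa [hk0] using this
  have hQ := wp_hasSum _ _ hB ω
  -- reindex by residue classes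
  let e : Fin k × (ℤ × ℤ) ≃ ℤ × ℤ :=
    (((Equiv.prodAssoc _ _ _).symm).trans
      ((Equiv.prodComm _ _).prodCongr (Equiv.refl _))).trans
      ((Int.divModEquiv k).symm.prodCongr (Equiv.refl _))
  have hQ' := e.hasSum_iff.mpr hQ
  have hfib : ∀ l : Fin k, HasSum (fun p : ℤ × ℤ =>
      ((fun p : ℤ × ℤ => ((ω + latPt ω₁ ((k : ℂ) * ω₂) p) ^ 2)⁻¹ -
        ((latPt ω₁ ((k : ℂ) * ω₂) p) ^ 2)⁻¹) ∘ e) (l, p))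
      (wp ((k : ℂ) * ω₁) ((k : ℂ) * ω₂) (ω + ((l : ℕ) : ℂ) * ω₁) -
        wp ((k : ℂ) * ω₁) ((k : ℂ) * ω₂) (((l : ℕ) : ℂ) * ω₁)) := by
    intro l
    have := (wp_hasSum _ _ hA (ω + ((l : ℕ) : ℂ) * ω₁)).sub
      (wp_hasSum _ _ hA (((l : ℕ) : ℂ) * ω₁))
    refine this.congr_fun fun p => ?_
    have e1 : latPt ω₁ ((k : ℂ) * ω₂) (e (l, p)) =
        ((l : ℕ) : ℂ) * ω₁ + latPt ((k : ℂ) * ω₁) ((k : ℂ) * ω₂) p := by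
      simp [e, latPt, Int.divModEquiv]
      ring
    simp only [Function.comp, e1]
    rw [← add_assoc]
    ring
  have h5 := (hQ'.prod_fiberwise hfib).unique (hasSum_fintype _)
  rw [h5, Fin.sum_univ_eq_sum_range (fun l : ℕ =>
    wp ((k : ℂ) * ω₁) ((k : ℂ) * ω₂) (ω + (l : ℂ) * ω₁) -
        wp ((k : ℂ) * ω₁) ((k : ℂ) * ω₂) ((l : ℂ) * ω₁)) k, Finset.sum_sub_distrib]
  have h6 : ∑ l ∈ Finset.range k, wp ((k : ℂ) * ω₁) ((k : ℂ) * ω₂) ((l : ℂ) * ω₁) =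
      ∑ l ∈ Finset.Ico 1 k, wp ((k : ℂ) * ω₁) ((k : ℂ) * ω₂) ((l : ℂ) * ω₁) := by
    rw [Finset.range_eq_Ico, Finset.sum_eq_sum_Ico_succ_bot (by omega)]
    simp [wp_zero]
  rw [h6]
  ring

end WeierstrassElliptic
end

section
/- Let (k,d) be a differential field of characteristic zero and let (R,d) be a differential ring extension of (k,d) containing an algebraic closure kbar of k that is closed under the derivation d. If f in R satisfies a non-trivial linear d-differential equation with coefficients in kbar, then f satisfies a non-trivial linear d-differential equation with coefficients in k. -/
open scoped BigOperators

/-- Let `(K,d)` be a differential field of characteristic zero and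
`(R,d)` a differential ring extension of `(K,d)` containing an algebraic closure `L` of
`K` which is closed under the derivation `d`.  If `f ∈ R` satisfies a non-trivial linear
`d`-differential equation with coefficients in `L`, then it satisfies one with
coefficients in `K`. -/
theorem statement13 (K L R : Type*) [Field K] [CharZero K] [Field L] [CommRing R]
    [Algebra K L] [Algebra L R] [Algebra K R] [IsScalarTower K L R]
    [IsAlgClosure K L]
    (d : R → R)
    (hadd : ∀ a b : R, d (a + b) = d a + d b)
    (hleib : ∀ a b : R, d (a * b) = a * d b + d a * b)
    (hresK : ∀ c : K, ∃ c' : K, d (algebraMap K R c) = algebraMap K R c')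
    (hresL : ∀ c : L, ∃ c' : L, d (algebraMap L R c) = algebraMap L R c')
    (f : R)
    (hf : ∃ (m : ℕ) (a : Fin (m + 1) → L), (∃ i, a i ≠ 0) ∧
        ∑ i : Fin (m + 1), algebraMap L R (a i) * d^[(i : ℕ)] f = 0) :
    ∃ (m : ℕ) (a : Fin (m + 1) → K), (∃ i, a i ≠ 0) ∧
      ∑ i : Fin (m + 1), algebraMap K R (a i) * d^[(i : ℕ)] f = 0 := by
  classical
  rcases subsingleton_or_nontrivial R with hR | hR
  · exact ⟨0, fun _ => 1, ⟨0, one_ne_zero⟩, Subsingleton.elim _ _⟩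
  have hinj : Function.Injective (algebraMap L R) := (algebraMap L R).injective
  have halg : Algebra.IsAlgebraic K L := IsAlgClosure.isAlgebraic
  have hd0 : d 0 = 0 := by
    have := hadd 0 0
    simpa using this
  have hKL : ∀ c : K, algebraMap K R c = algebraMap L R (algebraMap K L c) :=
    fun c => IsScalarTower.algebraMap_apply K L R c
  -- the derivation on polynomial expressions
  have hpoly : ∀ (x x' : L), d (algebraMap L R x) = algebraMap L R x' → ∀ p : Polynomial K,
      ∃ q : Polynomial K, d (algebraMap L R (Polynomial.aeval x p)) =
        algebraMap L R (Polynomial.aeval x q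
          + Polynomial.aeval x (Polynomial.derivative p) * x') := by
    intro x x' hx p
    have hX : ∀ p : Polynomial K, (∃ q : Polynomial K,
      d (algebraMap L R (Polynomial.aeval x p)) = algebraMap L R (Polynomial.aeval x q
          + Polynomial.aeval x (Polynomial.derivative p) * x')) →
        ∃ q : Polynomial K, d (algebraMap L R (Polynomial.aeval x (p * Polynomial.X))) =
        algebraMap L R (Polynomial.aeval x q
          + Polynomial.aeval x (Polynomial.derivative (p * Polynomial.X)) * x') := by
      rintro p ⟨q, hq⟩
      refine ⟨q * Polynomial.X, ?_⟩
      rw [map_mul, map_mul, hleib, hq, Polynomial.aeval_X, hx]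
      simp only [Polynomial.derivative_mul, Polynomial.derivative_X, map_mul, map_add,
        Polynomial.aeval_X, mul_one]
      ring
    induction p using Polynomial.induction_on with
    | C c =>
      obtain ⟨c', hc'⟩ := hresK c
      refine ⟨Polynomial.C c', ?_⟩
      simp only [Polynomial.aeval_C, Polynomial.derivative_C, map_zero, zero_mul, add_zero]
      rw [← hKL, ← hKL, hc']
    | add p q hp hq =>
      obtain ⟨p', hp⟩ := hp
      obtain ⟨q', hq⟩ := hq
      refine ⟨p' + q', ?_⟩
      rw [map_add, map_add, hadd, hp, hq]
      simp only [map_add, map_mul]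
      ring
    | monomial n c h =>
      have := hX _ h
      rwa [mul_assoc, ← pow_succ] at this
  have hF : ∀ (F : IntermediateField K L) (x : L), x ∈ F →
      ∃ x' ∈ F, d (algebraMap L R x) = algebraMap L R x' := by
    intro F x hxF
    obtain ⟨x', hx'⟩ := hresL x
    refine ⟨x', ?_, hx'⟩
    obtain ⟨q, hq⟩ := hpoly x x' hx' (minpoly K x)
    rw [minpoly.aeval, map_zero, hd0, ← map_zero (algebraMap L R)] at hq
    have h1 := hinj hq
    have hsep : (minpoly K x).Separable :=
      (minpoly.irreducible (halg.isAlgebraic x).isIntegral).separable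
    have hne := hsep.aeval_derivative_ne_zero (minpoly.aeval K x)
    have hmem : ∀ p : Polynomial K, Polynomial.aeval x p ∈ F := by
      intro p
      have := (Polynomial.aeval (⟨x, hxF⟩ : F) p).2
      rwa [← IntermediateField.aeval_coe] at this
    have h2 : x' = - Polynomial.aeval x q /
        Polynomial.aeval x (Polynomial.derivative (minpoly K x)) := by
      rw [eq_div_iff hne]
      linear_combination -h1
    rw [h2]
    exact F.div_mem (F.neg_mem (hmem _)) (hmem _)
  obtain ⟨m, a, ⟨i0, hi0⟩, hsum⟩ := hf
  let F : IntermediateField K L := IntermediateField.adjoin K (Set.range a)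
  have hFa : ∀ i, a i ∈ F := fun i => IntermediateField.subset_adjoin K _ ⟨i, rfl⟩
  have hFfin : FiniteDimensional K F :=
    IntermediateField.finiteDimensional_adjoin
      (fun x _ => (halg.isAlgebraic x).isIntegral)
  obtain ⟨n, hn, hnmax⟩ : ∃ n : Fin (m + 1), a n ≠ 0 ∧ ∀ j, n < j → a j = 0 := by
    obtain ⟨n, hn⟩ := (Finset.univ.filter (fun i => a i ≠ 0)).exists_maximal
      ⟨i0, by simpa using hi0⟩
    refine ⟨n, by simpa using hn.1, fun j hj => ?_⟩
    by_contra h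
    exact absurd (hn.2 (y := j) (by simpa using h) hj.le) (not_le.mpr hj)
  let φ : (Fin (n : ℕ) → F) →ₗ[K] R :=
    { toFun := fun c => ∑ i, algebraMap L R (c i : L) * d^[(i : ℕ)] f
      map_add' := by
        intro x y
        simp [add_mul, Finset.sum_add_distrib]
      map_smul' := by
        intro r x
        simp only [Pi.smul_apply, RingHom.id_apply, Finset.smul_sum]
        refine Finset.sum_congr rfl fun i _ => ?_
        rw [IntermediateField.coe_smul, Algebra.smul_def, Algebra.smul_def, map_mul, ← hKL,
          mul_assoc] }
  let V := LinearMap.range φ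
  have hφ : ∀ c, φ c = ∑ i, algebraMap L R (c i : L) * d^[(i : ℕ)] f := fun c => rfl
  have hVmul : ∀ x ∈ F, ∀ v ∈ V, algebraMap L R x * v ∈ V := by
    rintro x hx _ ⟨c, rfl⟩
    refine ⟨fun i => ⟨x, hx⟩ * c i, ?_⟩
    rw [hφ, hφ, Finset.mul_sum]
    refine Finset.sum_congr rfl fun i _ => ?_
    simp [mul_assoc]
  have hVlt : ∀ i : ℕ, i < (n : ℕ) → d^[i] f ∈ V := by
    intro i hi
    refine ⟨Pi.single ⟨i, hi⟩ 1, ?_⟩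
    rw [hφ, Finset.sum_eq_single ⟨i, hi⟩]
    · simp
    · intro b _ hb
      simp [Pi.single_eq_of_ne hb]
    · simp
  have hVn : d^[(n : ℕ)] f ∈ V := by
    have h1 : algebraMap L R (a n) * d^[(n : ℕ)] f ∈ V := by
      rw [← Finset.add_sum_erase _ _ (Finset.mem_univ n)] at hsum
      rw [eq_neg_of_add_eq_zero_left hsum]
      refine V.neg_mem (V.sum_mem fun j hj => ?_)
      rcases lt_or_gt_of_ne (Finset.ne_of_mem_erase hj) with h | h
      · exact hVmul _ (hFa j) _ (hVlt _ h)
      · rw [hnmax j h, map_zero, zero_mul]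
        exact V.zero_mem
    have h2 := hVmul _ (F.inv_mem (hFa n)) _ h1
    rwa [← mul_assoc, ← map_mul, inv_mul_cancel₀ hn, map_one, one_mul] at h2
  have hVd : ∀ v ∈ V, d v ∈ V := by
    rintro _ ⟨c, rfl⟩
    let D : R →+ R := ⟨⟨d, hd0⟩, hadd⟩
    have hD : ∀ x, d x = D x := fun _ => rfl
    rw [hφ, hD, map_sum]
    refine V.sum_mem fun i _ => ?_
    rw [← hD, hleib]
    obtain ⟨x', hx', he⟩ := hF F (c i) (c i).2
    refine V.add_mem (hVmul _ (c i).2 _ ?_) ?_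
    · rw [← Function.iterate_succ_apply' d]
      rcases Nat.lt_or_ge ((i : ℕ) + 1) n with h | h
      · exact hVlt _ h
      · have : (i : ℕ).succ = n := by have := i.2; omega
        rw [this]; exact hVn
    · rw [he]
      exact hVmul _ hx' _ (hVlt _ i.2)
  have hV0 : f ∈ V := by
    rcases Nat.eq_zero_or_pos (n : ℕ) with h | h
    · rw [h] at hVn; exact hVn
    · exact hVlt 0 h
  have hVall : ∀ N : ℕ, d^[N] f ∈ V := by
    intro N
    induction N with
    | zero => exact hV0
    | succ N ih => rw [Function.iterate_succ_apply']; exact hVd _ ih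
  have hVfin : FiniteDimensional K V := inferInstance
  let v : Fin (Module.finrank K V + 1) → V := fun i => ⟨d^[(i : ℕ)] f, hVall i⟩
  have hv : ¬ LinearIndependent K v := by
    intro h
    have := h.fintype_card_le_finrank
    simp at this
  obtain ⟨g, hg, i, hi⟩ := Fintype.not_linearIndependent_iff.mp hv
  refine ⟨_, g, ⟨i, hi⟩, ?_⟩
  have := congrArg (Subtype.val) hg
  simpa [v, Algebra.smul_def] using this
end
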